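/- Assume: (i) there exist C > 0 and r ∈ (0,1) such that for all bounded Lipschitz functions φ, ψ : X → ℂ with ∫_X φ dμ = ∫_X ψ dμ = 0 and all t ≥ 0, |∫_X φ · (ψ ∘ f_t) dμ| ≤ C r^t ‖φ‖_{Lip} ‖ψ‖_{Lip}; and (ii) there exists D > 0 such that for every bounded α-Hölder φ : X → ℂ with ∫_X φ dμ = 0 and every ε ∈ (0,1) there is a bounded Lipschitz φ_ε : X → ℂ with ∫_X φ_ε dμ = 0, sup_x |φ_ε(x) − φ(x)| ≤ ε^α ‖φ‖_{C^α}, and ‖φ_ε‖_{Lip} ≤ ε^{−D} sup_x |φ(x)|. Then there exist C'' > 0 and s' ∈ (0,1) such that for all bounded α-Hölder functions φ, ξ : X → ℂ with ∫_X φ dμ = ∫_X ξ dμ = 0 and all t ≥ 0, |∫_X φ · (ξ ∘ f_t) dμ| ≤ C'' (s')^t ‖φ‖_{C^α} ‖ξ‖_{C^α}. -/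

import Mathlib

/-!
Write `‖·‖` for the `α`-Hölder norm. The correlation of two Hölder observables `φ, ξ` at time `t`
is compared with that of their Lipschitz approximations `φε, ξε` at a scale `ε`
which is exponentially small in `t`. Replacing `φ, ξ` by `φε, ξε` costs at most
`3 ε ^ α ‖φ‖ ‖ξ‖` (`norm_mul_sub_mul_le`), while Lipschitz mixing bounds the correlation of the
approximations by `C r ^ t ε ^ (-2D) ‖φ‖ ‖ξ‖`. With `ε = r ^ (t / (4D)) / 2` both
are exponentially small: the second is a constant times `r ^ (t / 2)`, the first is at most
`3 r ^ (α t / (4D)) ‖φ‖ ‖ξ‖`. Hence the rate `s' = r ^ min (1 / 2) (α / (4D))` works. The factor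
`1 / 2` in `ε` keeps `ε < 1` at `t = 0`.
-/

open MeasureTheory

/-- The α-Hölder norm of a function on a metric space:
`sup_x |φ(x)| + sup_{x ≠ y} |φ(x) − φ(y)| / d(x,y)^α`.
The case `α = 1` is the Lipschitz norm. -/
noncomputable def holderNorm {X : Type*} [MetricSpace X] (α : ℝ) (φ : X → ℂ) : ℝ :=
  (⨆ x, ‖φ x‖) +
    ⨆ p : {p : X × X // p.1 ≠ p.2}, ‖φ p.val.1 - φ p.val.2‖ / dist p.val.1 p.val.2 ^ α

/-- `φ` is bounded and α-Hölder. The case `α = 1` is bounded Lipschitz. -/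
def IsBoundedHolder {X : Type*} [MetricSpace X] (α : ℝ) (φ : X → ℂ) : Prop :=
  (∃ M, ∀ x, ‖φ x‖ ≤ M) ∧ ∃ H, ∀ x y, ‖φ x - φ y‖ ≤ H * dist x y ^ α

lemma IsBoundedHolder.continuous {X : Type*} [MetricSpace X] {α : ℝ} (hα : 0 < α) {φ : X → ℂ}
    (h : IsBoundedHolder α φ) : Continuous φ := by
  obtain ⟨-, H, hH⟩ := h
  refine continuous_iff_continuousAt.2 fun x => ?_
  refine tendsto_iff_norm_sub_tendsto_zero.2 (squeeze_zero (fun _ => norm_nonneg _)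
    (fun y => hH y x) ?_)
  have hc : Continuous fun y : X => H * dist y x ^ α :=
    continuous_const.mul ((continuous_id.dist continuous_const).rpow_const fun _ => Or.inr hα.le)
  have := hc.tendsto x
  simpa [Real.zero_rpow hα.ne'] using this

lemma iSup_norm_le_holderNorm {X : Type*} [MetricSpace X] (α : ℝ) (φ : X → ℂ) :
    ⨆ x, ‖φ x‖ ≤ holderNorm α φ :=
  le_add_of_nonneg_right (Real.iSup_nonneg fun _ => by positivity)

lemma holderNorm_nonneg {X : Type*} [MetricSpace X] (α : ℝ) (φ : X → ℂ) : 0 ≤ holderNorm α φ :=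
  (Real.iSup_nonneg fun _ => norm_nonneg _).trans (iSup_norm_le_holderNorm α φ)

lemma IsBoundedHolder.norm_le {X : Type*} [MetricSpace X] {α : ℝ} {φ : X → ℂ}
    (h : IsBoundedHolder α φ) (x : X) : ‖φ x‖ ≤ holderNorm α φ := by
  obtain ⟨⟨M, hM⟩, -⟩ := h
  have hb : BddAbove (Set.range fun x => ‖φ x‖) := ⟨M, by rintro _ ⟨y, rfl⟩; exact hM y⟩
  exact (le_ciSup hb x).trans (iSup_norm_le_holderNorm α φ)

lemma IsBoundedHolder.integrable_mul_comp {X : Type*} [MetricSpace X] [CompactSpace X]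
    [MeasurableSpace X] [BorelSpace X] {μ : Measure X} [IsProbabilityMeasure μ] {α : ℝ}
    (hα : 0 < α) {φ ψ : X → ℂ} (hφ : IsBoundedHolder α φ) (hψ : IsBoundedHolder α ψ)
    {g : X → X} (hg : Measurable g) : Integrable (fun x => φ x * ψ (g x)) μ := by
  refine Integrable.of_bound (C := holderNorm α φ * holderNorm α ψ) ?_ ?_
  · exact ((hφ.continuous hα).measurable.mul
      ((hψ.continuous hα).measurable.comp hg)).aestronglyMeasurable
  · refine Filter.Eventually.of_forall fun x => ?_
    rw [norm_mul]
    exact mul_le_mul (hφ.norm_le x) (hψ.norm_le _) (norm_nonneg _) (holderNorm_nonneg _ _)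

/-- Approximating two factors of size `A`, `B` with errors `e A`, `e B`, where `e ≤ 1`, changes their
product by at most `3 e A B`. The bound `e ≤ 1` makes the norm of the
approximate first factor at most `2 A`. -/
lemma norm_mul_sub_mul_le {a b a' b' : ℂ} {A B e : ℝ} (he : 0 ≤ e) (he1 : e ≤ 1)
    (ha : ‖a‖ ≤ A) (hb : ‖b‖ ≤ B) (ha' : ‖a' - a‖ ≤ e * A) (hb' : ‖b' - b‖ ≤ e * B) :
    ‖a * b - a' * b'‖ ≤ 3 * e * (A * B) := by
  have hA : 0 ≤ A := (norm_nonneg _).trans ha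
  have hB : 0 ≤ B := (norm_nonneg _).trans hb
  have ha2 : ‖a'‖ ≤ 2 * A := by
    have h1 : ‖a'‖ ≤ ‖a' - a‖ + ‖a‖ := by simpa using norm_add_le (a' - a) a
    nlinarith
  have heq : a * b - a' * b' = -((a' - a) * b + a' * (b' - b)) := by ring
  rw [heq, norm_neg]
  calc ‖(a' - a) * b + a' * (b' - b)‖ ≤ ‖a' - a‖ * ‖b‖ + ‖a'‖ * ‖b' - b‖ := by
        rw [← norm_mul, ← norm_mul]; exact norm_add_le _ _
    _ ≤ (e * A) * B + (2 * A) * (e * B) := by gcongr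
    _ = 3 * e * (A * B) := by ring

/-- Exponential mixing for Lipschitz observables together with a Lipschitz approximation
property for Hölder functions yields exponential mixing for α-Hölder observables
(Lemma 1.2 of the paper, case k = 1). -/
theorem stmt2 {X : Type*} [MetricSpace X] [CompactSpace X] [MeasurableSpace X] [BorelSpace X]
    (μ : Measure X) [IsProbabilityMeasure μ] (α : ℝ) (hα0 : 0 < α) (hα1 : α ≤ 1)
    (f : ℝ → X → X) (hf : ∀ t, 0 ≤ t → MeasurePreserving (f t) μ μ)
    (hmix : ∃ C : ℝ, 0 < C ∧ ∃ r : ℝ, 0 < r ∧ r < 1 ∧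
      ∀ φ ψ : X → ℂ, IsBoundedHolder 1 φ → IsBoundedHolder 1 ψ →
        (∫ x, φ x ∂μ) = 0 → (∫ x, ψ x ∂μ) = 0 → ∀ t, 0 ≤ t →
        ‖∫ x, φ x * ψ (f t x) ∂μ‖ ≤ C * r ^ t * (holderNorm 1 φ * holderNorm 1 ψ))
    (happrox : ∃ D : ℝ, 0 < D ∧
      ∀ φ : X → ℂ, IsBoundedHolder α φ → (∫ x, φ x ∂μ) = 0 →
        ∀ ε : ℝ, 0 < ε → ε < 1 →
        ∃ φε : X → ℂ, IsBoundedHolder 1 φε ∧ (∫ x, φε x ∂μ) = 0 ∧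
          (∀ x, ‖φε x - φ x‖ ≤ ε ^ α * holderNorm α φ) ∧
          holderNorm 1 φε ≤ ε ^ (-D) * ⨆ x, ‖φ x‖) :
    ∃ C'' : ℝ, 0 < C'' ∧ ∃ s' : ℝ, 0 < s' ∧ s' < 1 ∧
      ∀ φ ξ : X → ℂ, IsBoundedHolder α φ → (∫ x, φ x ∂μ) = 0 →
        IsBoundedHolder α ξ → (∫ x, ξ x ∂μ) = 0 → ∀ t, 0 ≤ t →
        ‖∫ x, φ x * ξ (f t x) ∂μ‖ ≤ C'' * s' ^ t * (holderNorm α φ * holderNorm α ξ) := by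
  obtain ⟨C, hC, r, hr0, hr1, hmix⟩ := hmix
  obtain ⟨D, hD, happrox⟩ := happrox
  set κ : ℝ := 1 / (4 * D) with hκ
  have hκ0 : 0 < κ := by positivity
  set β : ℝ := min (1 / 2) (α * κ) with hβ
  have hβ0 : 0 < β := lt_min (by norm_num) (by positivity)
  set K : ℝ := (1 / 2 : ℝ) ^ (-(2 * D)) with hK
  have hK0 : 0 < K := by positivity
  refine ⟨C * K + 3, by positivity, r ^ β, by positivity, Real.rpow_lt_one hr0.le hr1 hβ0, ?_⟩
  intro φ ξ hφ hφ0 hξ hξ0 t ht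
  have hrt0 : 0 < r ^ (κ * t) := by positivity
  have hrt1 : r ^ (κ * t) ≤ 1 := Real.rpow_le_one hr0.le hr1.le (by positivity)
  set ε : ℝ := 1 / 2 * r ^ (κ * t) with hε
  have hε0 : 0 < ε := by positivity
  have hε1 : ε < 1 := by rw [hε]; linarith
  obtain ⟨φ', hφ', hφ'0, hφφ', hφ'N⟩ := happrox φ hφ hφ0 ε hε0 hε1
  obtain ⟨ξ', hξ', hξ'0, hξξ', hξ'N⟩ := happrox ξ hξ hξ0 ε hε0 hε1
  have hm := (hf t ht).measurable
  have hA := holderNorm_nonneg α φ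
  have hB := holderNorm_nonneg α ξ
  have hφ'A : holderNorm 1 φ' ≤ ε ^ (-D) * holderNorm α φ :=
    hφ'N.trans (by gcongr; exact iSup_norm_le_holderNorm α φ)
  have hξ'B : holderNorm 1 ξ' ≤ ε ^ (-D) * holderNorm α ξ :=
    hξ'N.trans (by gcongr; exact iSup_norm_le_holderNorm α ξ)
  have herr : ε ^ α ≤ (r ^ β) ^ t := by
    calc ε ^ α ≤ (r ^ (κ * t)) ^ α := by gcongr; rw [hε]; linarith
      _ = r ^ (κ * t * α) := (Real.rpow_mul hr0.le _ _).symm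
      _ ≤ r ^ (β * t) := by
        refine Real.rpow_le_rpow_of_exponent_ge hr0 hr1.le ?_
        have : β ≤ α * κ := min_le_right _ _
        nlinarith
      _ = (r ^ β) ^ t := Real.rpow_mul hr0.le _ _
  -- `ε ^ (-2D)` is `K * r ^ (-t / 2)`, which uses up half of the decay `r ^ t`.
  have hmain : r ^ t * (ε ^ (-D) * ε ^ (-D)) ≤ K * (r ^ β) ^ t := by
    have h1 : ε ^ (-D) * ε ^ (-D) = K * r ^ (-(t / 2)) := by
      rw [← Real.rpow_add hε0, hε, Real.mul_rpow (by norm_num) hrt0.le, ← Real.rpow_mul hr0.le,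
        hK]
      congr 2
      · ring
      · rw [hκ]; field_simp; ring
    have h2 : r ^ t * r ^ (-(t / 2)) = r ^ (1 / 2 * t) := by
      rw [← Real.rpow_add hr0]; congr 1; ring
    have h3 : r ^ (1 / 2 * t) ≤ (r ^ β) ^ t := by
      rw [← Real.rpow_mul hr0.le]
      refine Real.rpow_le_rpow_of_exponent_ge hr0 hr1.le ?_
      have : β ≤ 1 / 2 := min_le_left _ _
      gcongr
    calc r ^ t * (ε ^ (-D) * ε ^ (-D)) = K * (r ^ t * r ^ (-(t / 2))) := by rw [h1]; ring
      _ ≤ K * (r ^ β) ^ t := by rw [h2]; gcongr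
  have hlip : ‖∫ x, φ' x * ξ' (f t x) ∂μ‖
      ≤ C * K * (r ^ β) ^ t * (holderNorm α φ * holderNorm α ξ) := by
    calc ‖∫ x, φ' x * ξ' (f t x) ∂μ‖
        ≤ C * r ^ t * (holderNorm 1 φ' * holderNorm 1 ξ') := hmix φ' ξ' hφ' hξ' hφ'0 hξ'0 t ht
      _ ≤ C * r ^ t * ((ε ^ (-D) * holderNorm α φ) * (ε ^ (-D) * holderNorm α ξ)) := by
        gcongr
        exact holderNorm_nonneg 1 ξ'
      _ = C * (r ^ t * (ε ^ (-D) * ε ^ (-D))) * (holderNorm α φ * holderNorm α ξ) := by ring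
      _ ≤ C * (K * (r ^ β) ^ t) * (holderNorm α φ * holderNorm α ξ) := by gcongr
      _ = _ := by ring
  have hdiff : ‖(∫ x, φ x * ξ (f t x) ∂μ) - ∫ x, φ' x * ξ' (f t x) ∂μ‖
      ≤ 3 * (r ^ β) ^ t * (holderNorm α φ * holderNorm α ξ) := by
    rw [← integral_sub (hφ.integrable_mul_comp hα0 hξ hm)
      (hφ'.integrable_mul_comp one_pos hξ' hm)]
    have hle : ∀ x, ‖φ x * ξ (f t x) - φ' x * ξ' (f t x)‖
        ≤ 3 * ε ^ α * (holderNorm α φ * holderNorm α ξ) := fun x =>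
      norm_mul_sub_mul_le (by positivity) (Real.rpow_le_one hε0.le hε1.le hα0.le)
        (hφ.norm_le x) (hξ.norm_le _) (hφφ' x) (hξξ' _)
    have := norm_integral_le_of_norm_le_const (μ := μ) (Filter.Eventually.of_forall hle)
    rw [probReal_univ, mul_one] at this
    exact this.trans (by gcongr)
  calc ‖∫ x, φ x * ξ (f t x) ∂μ‖
      ≤ ‖(∫ x, φ x * ξ (f t x) ∂μ) - ∫ x, φ' x * ξ' (f t x) ∂μ‖
        + ‖∫ x, φ' x * ξ' (f t x) ∂μ‖ := norm_le_norm_sub_add _ _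
    _ ≤ 3 * (r ^ β) ^ t * (holderNorm α φ * holderNorm α ξ)
        + C * K * (r ^ β) ^ t * (holderNorm α φ * holderNorm α ξ) := add_le_add hdiff hlip
    _ = (C * K + 3) * (r ^ β) ^ t * (holderNorm α φ * holderNorm α ξ) := by ring
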